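/- arXiv:2409.05619 — 3 statements merged into one kernel-verified Lean document; each statement's English description precedes it below -/
import Mathlib

section
/- Suppose 𝒮 is finite. If the topological interior of the deterministic code capacity region ℛ_d of the two-sender classical-quantum arbitrarily varying multiple access channel is nonempty, then ℛ_r ⊆ ℛ_d. -/
open scoped ComplexOrder

noncomputable section

/-- A density matrix: positive semidefinite with unit trace. -/
def IsDensity {m : Type*} [Fintype m] (ρ : Matrix m m ℂ) : Prop :=
  ρ.PosSemidef ∧ ρ.trace = 1

/-- Tensor product of a finite family of matrices, realized on functions. -/
def tensorFam {k d : Type*} [Fintype k] (ρ : k → Matrix d d ℂ) :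
    Matrix (k → d) (k → d) ℂ :=
  Matrix.of fun i j => ∏ a, ρ a (i a) (j a)

section Codes

variable {𝒳 𝒴 𝒮 : Type*} [Fintype 𝒳] [DecidableEq 𝒳] [Fintype 𝒴] [DecidableEq 𝒴] {d : ℕ}

/-- `(R₁, R₂)` is an achievable deterministic rate pair for the CQ-AVMAC. -/
def AchievableDet (ρ : 𝒳 → 𝒴 → 𝒮 → Matrix (Fin d) (Fin d) ℂ) (R1 R2 : ℝ) : Prop :=
  0 ≤ R1 ∧ 0 ≤ R2 ∧
  ∀ β > (0 : ℝ), ∀ δ₁ > (0 : ℝ), ∀ δ₂ > (0 : ℝ), ∃ N : ℕ, ∀ n ≥ N,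
    ∃ (M₁ M₂ : ℕ) (f₁ : Fin M₁ → (Fin n → 𝒳)) (f₂ : Fin M₂ → (Fin n → 𝒴))
      (D : Fin M₁ → Fin M₂ → Matrix (Fin n → Fin d) (Fin n → Fin d) ℂ),
      (∀ m₁ m₂, (D m₁ m₂).PosSemidef) ∧
      (∑ m₁, ∑ m₂, D m₁ m₂ = 1) ∧
      (1 / (n : ℝ)) * Real.logb 2 M₁ > R1 - δ₁ ∧
      (1 / (n : ℝ)) * Real.logb 2 M₂ > R2 - δ₂ ∧
      (⨆ sv : Fin n → 𝒮,
        1 - (1 / ((M₁ : ℝ) * (M₂ : ℝ))) * ∑ m₁, ∑ m₂,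
          (Matrix.trace (D m₁ m₂ *
            tensorFam fun k => ρ (f₁ m₁ k) (f₂ m₂ k) (sv k))).re) < β

/-- The deterministic code capacity region `ℛ_d`. -/
def Rd (ρ : 𝒳 → 𝒴 → 𝒮 → Matrix (Fin d) (Fin d) ℂ) : Set (ℝ × ℝ) :=
  closure {r : ℝ × ℝ | AchievableDet ρ r.1 r.2}

/-- `(R₁, R₂)` is an achievable randomized rate pair for the CQ-AVMAC. -/
def AchievableRand (ρ : 𝒳 → 𝒴 → 𝒮 → Matrix (Fin d) (Fin d) ℂ) (R1 R2 : ℝ) : Prop :=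
  0 ≤ R1 ∧ 0 ≤ R2 ∧
  ∀ β > (0 : ℝ), ∀ δ₁ > (0 : ℝ), ∀ δ₂ > (0 : ℝ), ∃ N : ℕ, ∀ n ≥ N,
    ∃ (M₁ M₂ k₁ k₂ : ℕ) (G₁ : Fin k₁ → ℝ) (G₂ : Fin k₂ → ℝ)
      (f₁ : Fin k₁ → Fin M₁ → (Fin n → 𝒳)) (f₂ : Fin k₂ → Fin M₂ → (Fin n → 𝒴))
      (D : Fin k₁ → Fin k₂ → Fin M₁ → Fin M₂ →
        Matrix (Fin n → Fin d) (Fin n → Fin d) ℂ),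
      (∀ γ, 0 ≤ G₁ γ) ∧ (∑ γ, G₁ γ = 1) ∧ (∀ γ, 0 ≤ G₂ γ) ∧ (∑ γ, G₂ γ = 1) ∧
      (∀ γ₁ γ₂ m₁ m₂, (D γ₁ γ₂ m₁ m₂).PosSemidef) ∧
      (∀ γ₁ γ₂, ∑ m₁, ∑ m₂, D γ₁ γ₂ m₁ m₂ = 1) ∧
      (1 / (n : ℝ)) * Real.logb 2 M₁ > R1 - δ₁ ∧
      (1 / (n : ℝ)) * Real.logb 2 M₂ > R2 - δ₂ ∧
      (⨆ sv : Fin n → 𝒮, ∑ γ₁, ∑ γ₂, G₁ γ₁ * G₂ γ₂ *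
        (1 - (1 / ((M₁ : ℝ) * (M₂ : ℝ))) * ∑ m₁, ∑ m₂,
          (Matrix.trace (D γ₁ γ₂ m₁ m₂ *
            tensorFam fun k => ρ (f₁ γ₁ m₁ k) (f₂ γ₂ m₂ k) (sv k))).re)) < β

/-- The random code capacity region `ℛ_r`. -/
def Rr (ρ : 𝒳 → 𝒴 → 𝒮 → Matrix (Fin d) (Fin d) ℂ) : Set (ℝ × ℝ) :=
  closure {r : ℝ × ℝ | AchievableRand ρ r.1 r.2}

end Codes

/-!
Replace each of the two keys of a random code by an independent sample from its distribution. By a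
Chernoff bound and a union bound over the exponentially many state sequences, linearly many sampled
values per sender keep the error small for all state sequences at once; as the keys are
independent, they can be sampled one after the other.

Since the interior of `ℛ_d` is nonempty, some rate pair with both rates positive is achieved
deterministically, and a short block at these rates already carries linearly many keys for each
sender. Sending the keys on an initial segment whose length is a small fraction of the block, and
then using the random code with these keys, costs a negligible amount of rate. The average error is
at most the sum of the two average errors, because the uniformly distributed initial messages act as
uniformly distributed keys.
-/

open Filter Finset
open scoped BigOperators Kronecker Matrix

section Topology

lemma inter_interior_nonempty_of_interior_closure {E : Type*} [TopologicalSpace E] {A B : Set E}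
    (hAB : A ⊆ B) (hB : IsClosed B) (hA : (interior (closure A)).Nonempty) :
    (A ∩ interior B).Nonempty := by
  obtain ⟨p, hp⟩ := hA
  obtain ⟨r, hr, hrA⟩ := mem_closure_iff.mp (interior_subset hp) _ isOpen_interior hp
  exact ⟨r, hrA, interior_mono (closure_minimal hAB hB) hr⟩

lemma ciSup_lt_iff_of_finite {α T : Type*} [ConditionallyCompleteLinearOrder α] [Finite T]
    [Nonempty T] {f : T → α} {a : α} :
    ⨆ t, f t < a ↔ ∀ t, f t < a := by
  refine ⟨fun h t => (le_ciSup (Set.finite_range f).bddAbove t).trans_lt h, fun h => ?_⟩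
  obtain ⟨t, ht⟩ := exists_eq_ciSup_of_finite (f := f)
  exact ht ▸ h t

end Topology

section Averages

variable {ι κ J J' T : Type*} [Fintype ι] [Fintype κ] [Fintype J] [Fintype J'] [Fintype T]

lemma expect_mem_Icc_zero_one {f : ι → ℝ} (hf : ∀ i, f i ∈ Set.Icc 0 1) :
    𝔼 i, f i ∈ Set.Icc 0 1 := by
  refine ⟨expect_nonneg fun i _ => (hf i).1, ?_⟩
  rcases isEmpty_or_nonempty ι with _ | _
  · simp
  · exact expect_le univ_nonempty fun i _ => (hf i).2

lemma expect_prod_type {M : Type*} [AddCommMonoid M] [Module ℚ≥0 M] (f : ι × κ → M) :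
    𝔼 p, f p = 𝔼 i, 𝔼 j, f (i, j) := by
  rw [← univ_product_univ, expect_product]

lemma sum_mul_mem_Icc_zero_one {G f : ι → ℝ} (hG : G ∈ stdSimplex ℝ ι)
    (hf : ∀ i, f i ∈ Set.Icc 0 1) : ∑ i, G i * f i ∈ Set.Icc 0 1 :=
  ⟨sum_nonneg fun i _ => mul_nonneg (hG.1 i) (hf i).1,
    hG.2 ▸ sum_le_sum fun i _ => mul_le_of_le_one_right (hG.1 i) (hf i).2⟩

lemma exists_le_of_sum_mul_le {G f : ι → ℝ} (hG : G ∈ stdSimplex ℝ ι) {c : ℝ}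
    (h : ∑ i, G i * f i ≤ c) : ∃ i, f i ≤ c := by
  by_contra! hlt
  obtain ⟨i, -, hi⟩ : ∃ i ∈ univ, 0 < G i :=
    exists_lt_of_sum_lt (by simp [hG.2])
  have hsum : ∑ i, G i * c < ∑ i, G i * f i :=
    sum_lt_sum (fun i _ => mul_le_mul_of_nonneg_left (hlt i).le (hG.1 i))
      ⟨i, mem_univ i, mul_lt_mul_of_pos_left (hlt i) hi⟩
  rw [← sum_mul, hG.2, one_mul] at hsum
  exact hsum.not_ge h

lemma sum_pi_prod_eq_sum_pow {R : Type*} [CommSemiring R] (J : Type*) [Fintype J]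
    [DecidableEq J] (f : ι → R) :
    ∑ g : J → ι, ∏ j, f (g j) = (∑ i, f i) ^ Fintype.card J := by
  rw [← Fintype.prod_sum fun _ : J => f, prod_const, card_univ]

lemma prod_mem_stdSimplex_pi (J : Type*) [Fintype J] [DecidableEq J] {G : ι → ℝ}
    (hG : G ∈ stdSimplex ℝ ι) :
    (fun g : J → ι => ∏ j, G (g j)) ∈ stdSimplex ℝ (J → ι) :=
  ⟨fun _ => prod_nonneg fun _ _ => hG.1 _, by rw [sum_pi_prod_eq_sum_pow, hG.2, one_pow]⟩

lemma sum_mul_exp_le_exp_two_mul {G e : ι → ℝ} (hG : G ∈ stdSimplex ℝ ι)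
    (he : ∀ i, e i ∈ Set.Icc 0 1) {ε : ℝ} (hε : ∑ i, G i * e i ≤ ε) :
    ∑ i, G i * Real.exp (e i) ≤ Real.exp (2 * ε) := by
  have hexp (i : ι) : Real.exp (e i) ≤ 1 + 2 * e i := by
    have h := Real.abs_exp_sub_one_le (abs_le.mpr ⟨by linarith [(he i).1], (he i).2⟩)
    rw [abs_of_nonneg (he i).1] at h
    linarith [le_of_abs_le h]
  calc ∑ i, G i * Real.exp (e i)
      ≤ ∑ i, G i * (1 + 2 * e i) :=
        sum_le_sum fun i _ => mul_le_mul_of_nonneg_left (hexp i) (hG.1 i)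
    _ = 1 + 2 * ∑ i, G i * e i := by
        simp only [mul_add, mul_one, sum_add_distrib, hG.2, mul_left_comm _ (2 : ℝ), ← mul_sum]
    _ ≤ 2 * ε + 1 := by linarith
    _ ≤ Real.exp (2 * ε) := Real.add_one_le_exp _

/- Draw the `g j` independently from `G`: the expected value of `∑ t, exp (∑ j, e (g j) t)`
factorizes over `j`, and some `g` does no worse than the expectation. -/
lemma exists_sum_exp_le {G : ι → ℝ} (hG : G ∈ stdSimplex ℝ ι) {e : ι → T → ℝ}
    (he : ∀ i t, e i t ∈ Set.Icc 0 1) {ε : ℝ} (hε : ∀ t, ∑ i, G i * e i t ≤ ε) :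
    ∃ g : J → ι, ∑ t, Real.exp (∑ j, e (g j) t) ≤
      Fintype.card T * Real.exp (2 * ε) ^ Fintype.card J := by
  classical
  apply exists_le_of_sum_mul_le (prod_mem_stdSimplex_pi J hG)
  calc ∑ g : J → ι, (∏ j, G (g j)) * ∑ t, Real.exp (∑ j, e (g j) t)
      = ∑ t, ∑ g : J → ι, ∏ j, G (g j) * Real.exp (e (g j) t) := by
        simp_rw [mul_sum, Real.exp_sum, ← prod_mul_distrib]
        exact sum_comm
    _ = ∑ t, (∑ i, G i * Real.exp (e i t)) ^ Fintype.card J :=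
        sum_congr rfl fun t _ => sum_pi_prod_eq_sum_pow J fun i => G i * Real.exp (e i t)
    _ ≤ ∑ _t : T, Real.exp (2 * ε) ^ Fintype.card J :=
        sum_le_sum fun t _ => pow_le_pow_left₀
          (sum_nonneg fun i _ => mul_nonneg (hG.1 i) (Real.exp_nonneg _))
          (sum_mul_exp_le_exp_two_mul hG (fun i => he i t) (hε t)) _
    _ = Fintype.card T * Real.exp (2 * ε) ^ Fintype.card J := by
        rw [sum_const, card_univ, nsmul_eq_mul]

lemma exists_sample_expect_le [Nonempty J] {G : ι → ℝ} (hG : G ∈ stdSimplex ℝ ι)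
    {e : ι → T → ℝ} (he : ∀ i t, e i t ∈ Set.Icc 0 1) {ε η : ℝ}
    (hε : ∀ t, ∑ i, G i * e i t ≤ ε) (hT : Real.log (Fintype.card T) ≤ η * Fintype.card J) :
    ∃ g : J → ι, ∀ t, 𝔼 j, e (g j) t ≤ 2 * ε + η := by
  obtain ⟨g, hg⟩ := exists_sum_exp_le (J := J) hG he hε
  refine ⟨g, fun t => ?_⟩
  have hTpos : (0 : ℝ) < Fintype.card T := by
    have : Nonempty T := ⟨t⟩
    exact_mod_cast Fintype.card_pos
  have hexp : Real.exp (∑ j, e (g j) t) ≤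
      Real.exp (Real.log (Fintype.card T) + Fintype.card J * (2 * ε)) := by
    rw [Real.exp_add, Real.exp_log hTpos, Real.exp_nat_mul]
    exact (single_le_sum (f := fun t => Real.exp (∑ j, e (g j) t))
      (fun t _ => Real.exp_nonneg _) (mem_univ t)).trans hg
  have hsum := Real.exp_le_exp.mp hexp
  rw [Fintype.expect_eq_sum_div_card, div_le_iff₀ (by exact_mod_cast Fintype.card_pos)]
  linarith

lemma exists_sample_expect_expect_le [Nonempty J] [Nonempty J'] {G : ι → ℝ} {G' : κ → ℝ}
    (hG : G ∈ stdSimplex ℝ ι) (hG' : G' ∈ stdSimplex ℝ κ) {e : ι → κ → T → ℝ}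
    (he : ∀ i j t, e i j t ∈ Set.Icc 0 1) {ε η : ℝ}
    (hε : ∀ t, ∑ i, ∑ j, G i * G' j * e i j t ≤ ε)
    (hJ : Real.log (Fintype.card T) ≤ η * Fintype.card J)
    (hJ' : Real.log (Fintype.card T) ≤ η * Fintype.card J') :
    ∃ (g : J → ι) (g' : J' → κ), ∀ t, 𝔼 a, 𝔼 b, e (g a) (g' b) t ≤ 4 * ε + 3 * η := by
  obtain ⟨g, hg⟩ := exists_sample_expect_le hG
    (e := fun i t => ∑ j, G' j * e i j t)
    (fun i t => sum_mul_mem_Icc_zero_one hG' fun j => he i j t)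
    (fun t => by simpa only [mul_sum, mul_assoc] using hε t) hJ
  obtain ⟨g', hg'⟩ := exists_sample_expect_le hG'
    (e := fun j t => 𝔼 a, e (g a) j t)
    (fun j t => expect_mem_Icc_zero_one fun a => he (g a) j t)
    (fun t => by simpa only [mul_expect, ← expect_sum_comm] using hg t) hJ'
  refine ⟨g, g', fun t => ?_⟩
  rw [expect_comm]
  linarith [hg' t]

end Averages

section Matrices

variable {𝕜 m n k l d ι κ : Type*} [RCLike 𝕜] [Fintype k] [Fintype l] [Fintype ι] [Fintype κ]

lemma exists_eq_conjTranspose_mul_self [Fintype m] {A : Matrix m m 𝕜} (hA : A.PosSemidef) :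
    ∃ C : Matrix m m 𝕜, A = Cᴴ * C := by
  classical
  open scoped MatrixOrder in
  exact CStarAlgebra.nonneg_iff_eq_star_mul_self.mp hA.nonneg

lemma trace_mul_nonneg_of_posSemidef [Fintype m] {A B : Matrix m m 𝕜}
    (hA : A.PosSemidef) (hB : B.PosSemidef) : 0 ≤ (A * B).trace := by
  obtain ⟨C, rfl⟩ := exists_eq_conjTranspose_mul_self hB
  rw [← mul_assoc, Matrix.trace_mul_comm, ← mul_assoc]
  exact (hA.mul_mul_conjTranspose_same C).trace_nonneg

lemma trace_submatrix_equiv {R : Type*} [AddCommMonoid R] [Fintype m] [Fintype n]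
    (A : Matrix n n R) (e : m ≃ n) :
    (A.submatrix e e).trace = A.trace :=
  e.sum_comp fun i => A i i

lemma trace_submatrix_mul_submatrix {R : Type*} [NonUnitalNonAssocSemiring R] [Fintype m]
    [Fintype n] (A B : Matrix n n R) (e : m ≃ n) :
    (A.submatrix e e * B.submatrix e e).trace = (A * B).trace := by
  rw [Matrix.submatrix_mul_equiv, trace_submatrix_equiv]

lemma tensorFam_mul [DecidableEq k] [Fintype d] (A B : k → Matrix d d ℂ) :
    tensorFam (fun a => A a * B a) = tensorFam A * tensorFam B := by
  ext i j
  simp only [tensorFam, Matrix.of_apply, Matrix.mul_apply, Fintype.prod_sum, prod_mul_distrib]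

lemma conjTranspose_tensorFam (A : k → Matrix d d ℂ) :
    (tensorFam A)ᴴ = tensorFam fun a => (A a)ᴴ := by
  ext i j
  simp [tensorFam, Matrix.conjTranspose_apply]

lemma trace_tensorFam [DecidableEq k] [Fintype d] (A : k → Matrix d d ℂ) :
    (tensorFam A).trace = ∏ a, (A a).trace := by
  simp only [Matrix.trace, Matrix.diag_apply, tensorFam, Matrix.of_apply, Fintype.prod_sum]

lemma posSemidef_tensorFam [Finite d] {A : k → Matrix d d ℂ} (hA : ∀ a, (A a).PosSemidef) :
    (tensorFam A).PosSemidef := by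
  classical
  cases nonempty_fintype d
  choose C hC using fun a => exists_eq_conjTranspose_mul_self (hA a)
  rw [funext hC, tensorFam_mul, ← conjTranspose_tensorFam]
  exact Matrix.posSemidef_conjTranspose_mul_self _

lemma isDensity_tensorFam [DecidableEq k] [Fintype d] {A : k → Matrix d d ℂ}
    (hA : ∀ a, IsDensity (A a)) : IsDensity (tensorFam A) :=
  ⟨posSemidef_tensorFam fun a => (hA a).1, by simp [trace_tensorFam, (hA _).2]⟩

lemma tensorFam_comp_equiv (A : k → Matrix d d ℂ) (e : l ≃ k) :
    tensorFam (fun a => A (e a)) =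
      (tensorFam A).submatrix (e.arrowCongr (.refl d)) (e.arrowCongr (.refl d)) := by
  ext i j
  simp only [tensorFam, Matrix.of_apply, Matrix.submatrix_apply, Equiv.arrowCongr_apply]
  rw [← e.prod_comp]
  simp

lemma tensorFam_sum_type (A : k ⊕ l → Matrix d d ℂ) :
    tensorFam A = (tensorFam (fun a => A (.inl a)) ⊗ₖ tensorFam fun a => A (.inr a)).submatrix
      (Equiv.sumArrowEquivProdArrow k l d) (Equiv.sumArrowEquivProdArrow k l d) := by
  ext i j
  simp [tensorFam, Equiv.sumArrowEquivProdArrow]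

/-- A positive operator-valued measure with finite outcome set `ι`: positive semidefinite matrices
summing to the identity. -/
def IsPOVM [DecidableEq m] (D : ι → Matrix m m ℂ) : Prop :=
  (∀ i, (D i).PosSemidef) ∧ ∑ i, D i = 1

namespace IsPOVM

variable [DecidableEq m] [DecidableEq n]

lemma comp_equiv {D : ι → Matrix m m ℂ} (hD : IsPOVM D) (e : κ ≃ ι) :
    IsPOVM fun j => D (e j) :=
  ⟨fun j => hD.1 (e j), (e.sum_comp D).trans hD.2⟩

lemma submatrix {D : ι → Matrix n n ℂ} (hD : IsPOVM D) (e : m ≃ n) :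
    IsPOVM fun i => (D i).submatrix e e := by
  refine ⟨fun i => (hD.1 i).submatrix e, ?_⟩
  rw [← Matrix.submatrix_one_equiv e, ← hD.2]
  ext x y
  simp [Matrix.sum_apply]

lemma kronecker [Finite m] [Finite n] {D : ι → Matrix m m ℂ} {E : ι → κ → Matrix n n ℂ}
    (hD : IsPOVM D) (hE : ∀ i, IsPOVM (E i)) : IsPOVM fun p : ι × κ => D p.1 ⊗ₖ E p.1 p.2 := by
  refine ⟨fun p => (hD.1 p.1).kronecker ((hE p.1).1 p.2), ?_⟩
  have hinner (i : ι) : ∑ j, D i ⊗ₖ E i j = D i ⊗ₖ (1 : Matrix n n ℂ) := by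
    rw [← (hE i).2]
    ext x y
    simp [Matrix.sum_apply, mul_sum]
  rw [Fintype.sum_prod_type, ← Matrix.one_kronecker_one, ← hD.2]
  simp only [hinner]
  ext x y
  simp [Matrix.sum_apply, sum_mul]

lemma re_trace_mul_mem_Icc [Fintype m] {D : ι → Matrix m m ℂ} (hD : IsPOVM D)
    {σ : Matrix m m ℂ} (hσ : IsDensity σ) (i : ι) : (D i * σ).trace.re ∈ Set.Icc 0 1 := by
  have hnonneg (i : ι) : 0 ≤ (D i * σ).trace.re :=
    (Complex.nonneg_iff.mp (trace_mul_nonneg_of_posSemidef (hD.1 i) hσ.1)).1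
  have htotal : ∑ i, (D i * σ).trace.re = 1 := by
    rw [← Complex.re_sum, ← Matrix.trace_sum, ← sum_mul, hD.2, one_mul, hσ.2, Complex.one_re]
  exact ⟨hnonneg i, htotal ▸ single_le_sum (fun i _ => hnonneg i) (mem_univ i)⟩

end IsPOVM

end Matrices

/-- A deterministic two-sender code with block positions `k`, local output space `ℂ^d` and finite
message sets `ι` and `κ`; the decoder is a POVM on the tensor power, indexed by message pairs. -/
structure MACCode (𝒳 𝒴 k d ι κ : Type*) [Fintype k] [DecidableEq d] [Fintype ι]
    [Fintype κ] where
  enc₁ : ι → k → 𝒳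
  enc₂ : κ → k → 𝒴
  dec : ι × κ → Matrix (k → d) (k → d) ℂ
  isPOVM_dec : IsPOVM dec

/-- The codes underlying a random code: sender 1 uses the key `γ₁ : Γ₁`, sender 2 the key
`γ₂ : Γ₂`, and the decoder both. The distributions of the keys are kept separate. -/
structure MACCodeFamily (Γ₁ Γ₂ 𝒳 𝒴 k d ι κ : Type*) [Fintype k] [DecidableEq d] [Fintype ι]
    [Fintype κ] where
  enc₁ : Γ₁ → ι → k → 𝒳
  enc₂ : Γ₂ → κ → k → 𝒴
  dec : Γ₁ → Γ₂ → ι × κ → Matrix (k → d) (k → d) ℂ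
  isPOVM_dec : ∀ γ₁ γ₂, IsPOVM (dec γ₁ γ₂)

section MultipleAccessCodes

variable {𝒳 𝒴 𝒮 k l d ι κ ι' κ' Γ₁ Γ₂ : Type*} [Fintype k] [DecidableEq k] [Fintype l]
  [DecidableEq l] [Fintype d] [DecidableEq d] [Fintype ι] [Fintype κ] [Fintype ι'] [Fintype κ']
  {ρ : 𝒳 → 𝒴 → 𝒮 → Matrix d d ℂ}

namespace MACCode

/-- The probability that the message pair `(i, j)`, sent under the state sequence `s`, is decoded
correctly. -/
def success (C : MACCode 𝒳 𝒴 k d ι κ) (ρ : 𝒳 → 𝒴 → 𝒮 → Matrix d d ℂ) (s : k → 𝒮)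
    (i : ι) (j : κ) : ℝ :=
  (C.dec (i, j) * tensorFam fun t => ρ (C.enc₁ i t) (C.enc₂ j t) (s t)).trace.re

/-- The average error `ē(C, s)`; it equals `1` when there are no messages. -/
def avgError (C : MACCode 𝒳 𝒴 k d ι κ) (ρ : 𝒳 → 𝒴 → 𝒮 → Matrix d d ℂ) (s : k → 𝒮) : ℝ :=
  1 - 𝔼 i, 𝔼 j, C.success ρ s i j

variable (C : MACCode 𝒳 𝒴 k d ι κ) (s : k → 𝒮)

lemma success_mem_Icc (hρ : ∀ x y s, IsDensity (ρ x y s)) (i : ι) (j : κ) :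
    C.success ρ s i j ∈ Set.Icc 0 1 :=
  C.isPOVM_dec.re_trace_mul_mem_Icc (isDensity_tensorFam fun _ => hρ _ _ _) _

lemma avgError_mem_Icc (hρ : ∀ x y s, IsDensity (ρ x y s)) : C.avgError ρ s ∈ Set.Icc 0 1 := by
  obtain ⟨h0, h1⟩ := expect_mem_Icc_zero_one fun i =>
    expect_mem_Icc_zero_one (C.success_mem_Icc s hρ i)
  exact ⟨sub_nonneg.mpr h1, sub_le_self 1 h0⟩

lemma avgError_eq_expect_one_sub [Nonempty ι] [Nonempty κ] :
    C.avgError ρ s = 𝔼 i, 𝔼 j, (1 - C.success ρ s i j) := by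
  simp only [avgError, expect_sub_distrib, Fintype.expect_const]

lemma avgError_eq_one_sub_sum : C.avgError ρ s =
    1 - 1 / ((Fintype.card ι : ℝ) * Fintype.card κ) * ∑ i, ∑ j, C.success ρ s i j := by
  simp only [avgError, Fintype.expect_eq_sum_div_card, ← sum_div]
  rw [div_div, mul_comm (Fintype.card κ : ℝ), one_div_mul_eq_div]

lemma nonempty_of_avgError_lt_one {C : MACCode 𝒳 𝒴 k d ι κ} {s : k → 𝒮}
    (h : C.avgError ρ s < 1) : Nonempty ι ∧ Nonempty κ := by
  by_contra hempty
  rw [not_and_or, not_nonempty_iff, not_nonempty_iff] at hempty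
  rcases hempty with _ | _ <;> simp [avgError] at h

/-- The code `C` with its messages and block positions relabelled. -/
def relabel (C : MACCode 𝒳 𝒴 k d ι κ) (eι : ι ≃ ι') (eκ : κ ≃ κ') (ek : k ≃ l) :
    MACCode 𝒳 𝒴 l d ι' κ' where
  enc₁ i t := C.enc₁ (eι.symm i) (ek.symm t)
  enc₂ j t := C.enc₂ (eκ.symm j) (ek.symm t)
  dec p := (C.dec (eι.symm p.1, eκ.symm p.2)).submatrix
    (ek.symm.arrowCongr (.refl d)) (ek.symm.arrowCongr (.refl d))
  isPOVM_dec := (C.isPOVM_dec.comp_equiv (eι.prodCongr eκ).symm).submatrix _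

lemma success_relabel (eι : ι ≃ ι') (eκ : κ ≃ κ') (ek : k ≃ l) (s : l → 𝒮) (i : ι) (j : κ) :
    (C.relabel eι eκ ek).success ρ s (eι i) (eκ j) = C.success ρ (fun t => s (ek t)) i j := by
  have hstate := tensorFam_comp_equiv
    (fun t => ρ (C.enc₁ i t) (C.enc₂ j t) (s (ek t))) ek.symm
  simp only [Equiv.apply_symm_apply] at hstate
  simp only [success, relabel, Equiv.symm_apply_apply, hstate, trace_submatrix_mul_submatrix]

lemma avgError_relabel (eι : ι ≃ ι') (eκ : κ ≃ κ') (ek : k ≃ l) (s : l → 𝒮) :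
    (C.relabel eι eκ ek).avgError ρ s = C.avgError ρ fun t => s (ek t) := by
  unfold avgError
  congr 1
  symm
  exact Fintype.expect_equiv eι _ _ fun i => Fintype.expect_equiv eκ _ _ fun j =>
    (C.success_relabel eι eκ ek s i j).symm

end MACCode

namespace MACCodeFamily

/-- The deterministic code used under the keys `γ₁` and `γ₂`. -/
def code (F : MACCodeFamily Γ₁ Γ₂ 𝒳 𝒴 k d ι κ) (γ₁ : Γ₁) (γ₂ : Γ₂) : MACCode 𝒳 𝒴 k d ι κ where
  enc₁ := F.enc₁ γ₁
  enc₂ := F.enc₂ γ₂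
  dec := F.dec γ₁ γ₂
  isPOVM_dec := F.isPOVM_dec γ₁ γ₂

/-- The expected average error `Ē(s)` when the keys are drawn independently from `G₁` and `G₂`. -/
def expectedError [Fintype Γ₁] [Fintype Γ₂] (F : MACCodeFamily Γ₁ Γ₂ 𝒳 𝒴 k d ι κ)
    (G₁ : Γ₁ → ℝ) (G₂ : Γ₂ → ℝ) (ρ : 𝒳 → 𝒴 → 𝒮 → Matrix d d ℂ) (s : k → 𝒮) : ℝ :=
  ∑ γ₁, ∑ γ₂, G₁ γ₁ * G₂ γ₂ * (F.code γ₁ γ₂).avgError ρ s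

/-- The family with keys in `J₁` and `J₂`, used through key maps `g₁` and `g₂`. -/
def compKeys {J₁ J₂ : Type*} (F : MACCodeFamily Γ₁ Γ₂ 𝒳 𝒴 k d ι κ) (g₁ : J₁ → Γ₁)
    (g₂ : J₂ → Γ₂) : MACCodeFamily J₁ J₂ 𝒳 𝒴 k d ι κ where
  enc₁ a := F.enc₁ (g₁ a)
  enc₂ b := F.enc₂ (g₂ b)
  dec a b := F.dec (g₁ a) (g₂ b)
  isPOVM_dec a b := F.isPOVM_dec (g₁ a) (g₂ b)

lemma nonempty_of_expectedError_lt_one [Fintype Γ₁] [Fintype Γ₂]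
    {F : MACCodeFamily Γ₁ Γ₂ 𝒳 𝒴 k d ι κ} {G₁ : Γ₁ → ℝ} {G₂ : Γ₂ → ℝ}
    (hG₁ : G₁ ∈ stdSimplex ℝ Γ₁) (hG₂ : G₂ ∈ stdSimplex ℝ Γ₂) {s : k → 𝒮}
    (h : F.expectedError G₁ G₂ ρ s < 1) : Nonempty ι ∧ Nonempty κ := by
  simp only [expectedError, mul_assoc, ← mul_sum] at h
  obtain ⟨γ₁, h₁⟩ := exists_le_of_sum_mul_le hG₁ le_rfl
  obtain ⟨γ₂, h₂⟩ := exists_le_of_sum_mul_le hG₂ h₁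
  exact MACCode.nonempty_of_avgError_lt_one (h₂.trans_lt h)

end MACCodeFamily

namespace MACCode

/-- Concatenation: the messages of `C` are sent on the block `k` and then serve as keys for `F` on
the block `l`, so each message of the whole code is a key followed by a message of `F`. -/
def concat (C : MACCode 𝒳 𝒴 k d ι κ) (F : MACCodeFamily ι κ 𝒳 𝒴 l d ι' κ') :
    MACCode 𝒳 𝒴 (k ⊕ l) d (ι × ι') (κ × κ') where
  enc₁ x := Sum.elim (C.enc₁ x.1) (F.enc₁ x.1 x.2)
  enc₂ y := Sum.elim (C.enc₂ y.1) (F.enc₂ y.1 y.2)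
  dec p := (C.dec (p.1.1, p.2.1) ⊗ₖ F.dec p.1.1 p.2.1 (p.1.2, p.2.2)).submatrix
    (Equiv.sumArrowEquivProdArrow k l d) (Equiv.sumArrowEquivProdArrow k l d)
  isPOVM_dec := ((C.isPOVM_dec.kronecker fun q => F.isPOVM_dec q.1 q.2).comp_equiv
    (Equiv.prodProdProdComm ι ι' κ κ')).submatrix _

variable (C : MACCode 𝒳 𝒴 k d ι κ) (F : MACCodeFamily ι κ 𝒳 𝒴 l d ι' κ')

lemma success_concat (hρ : ∀ x y s, IsDensity (ρ x y s)) (s : k ⊕ l → 𝒮) (x : ι × ι')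
    (y : κ × κ') : (C.concat F).success ρ s x y =
      C.success ρ (fun t => s (.inl t)) x.1 y.1 *
        (F.code x.1 y.1).success ρ (fun t => s (.inr t)) x.2 y.2 := by
  have him : (C.dec (x.1, y.1) *
      tensorFam fun t => ρ (C.enc₁ x.1 t) (C.enc₂ y.1 t) (s (.inl t))).trace.im = 0 :=
    (Complex.nonneg_iff.mp (trace_mul_nonneg_of_posSemidef (C.isPOVM_dec.1 _)
      (posSemidef_tensorFam fun _ => (hρ _ _ _).1))).2.symm
  simp only [success, concat, MACCodeFamily.code, tensorFam_sum_type, Sum.elim_inl, Sum.elim_inr,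
    trace_submatrix_mul_submatrix, ← Matrix.mul_kronecker_mul, Matrix.trace_kronecker,
    Complex.mul_re, him, zero_mul, sub_zero]

lemma avgError_concat_le [Nonempty ι] [Nonempty κ] [Nonempty ι'] [Nonempty κ']
    (hρ : ∀ x y s, IsDensity (ρ x y s)) (s : k ⊕ l → 𝒮) :
    (C.concat F).avgError ρ s ≤ C.avgError ρ (fun t => s (.inl t)) +
      𝔼 i, 𝔼 j, (F.code i j).avgError ρ fun t => s (.inr t) := by
  set p := C.success ρ fun t => s (.inl t)
  set q := fun i j => (F.code i j).success ρ fun t => s (.inr t)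
  have hunion (x : ι × ι') (y : κ × κ') : 1 - p x.1 y.1 * q x.1 y.1 x.2 y.2 ≤
      (1 - p x.1 y.1) + (1 - q x.1 y.1 x.2 y.2) := by
    have hp := (C.success_mem_Icc (fun t => s (.inl t)) hρ x.1 y.1).2
    have hq := ((F.code x.1 y.1).success_mem_Icc (fun t => s (.inr t)) hρ x.2 y.2).2
    nlinarith [mul_nonneg (sub_nonneg.mpr hp) (sub_nonneg.mpr hq)]
  have hkeys : 𝔼 x : ι × ι', 𝔼 y : κ × κ', (1 - p x.1 y.1) =
      C.avgError ρ fun t => s (.inl t) := by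
    simp only [avgError_eq_expect_one_sub, expect_prod_type, Fintype.expect_const, p]
  have hmessages : 𝔼 x : ι × ι', 𝔼 y : κ × κ', (1 - q x.1 y.1 x.2 y.2) =
      𝔼 i, 𝔼 j, (F.code i j).avgError ρ fun t => s (.inr t) := by
    simp only [avgError_eq_expect_one_sub, expect_prod_type, q]
    exact expect_congr rfl fun i _ => expect_comm _ _ _
  calc (C.concat F).avgError ρ s
      = 𝔼 x : ι × ι', 𝔼 y : κ × κ', (1 - p x.1 y.1 * q x.1 y.1 x.2 y.2) := by
        simp only [avgError_eq_expect_one_sub, success_concat _ _ hρ, p, q]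
    _ ≤ 𝔼 x : ι × ι', 𝔼 y : κ × κ', ((1 - p x.1 y.1) + (1 - q x.1 y.1 x.2 y.2)) :=
        expect_le_expect fun x _ => expect_le_expect fun y _ => hunion x y
    _ = _ := by simp only [expect_add_distrib, hkeys, hmessages]

lemma exists_concat_avgError_le [Fintype Γ₁] [Fintype Γ₂] [Fintype 𝒮] [Nonempty 𝒮]
    (hρ : ∀ x y s, IsDensity (ρ x y s)) {ε : ℝ} (hε : ε < 1)
    (C : MACCode 𝒳 𝒴 k d ι κ) (hC : ∀ s, C.avgError ρ s ≤ ε)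
    (F : MACCodeFamily Γ₁ Γ₂ 𝒳 𝒴 l d ι' κ') {G₁ : Γ₁ → ℝ} {G₂ : Γ₂ → ℝ}
    (hG₁ : G₁ ∈ stdSimplex ℝ Γ₁) (hG₂ : G₂ ∈ stdSimplex ℝ Γ₂)
    (hF : ∀ s, F.expectedError G₁ G₂ ρ s ≤ ε)
    (hι : Real.log (Fintype.card (l → 𝒮)) ≤ ε * Fintype.card ι)
    (hκ : Real.log (Fintype.card (l → 𝒮)) ≤ ε * Fintype.card κ) :
    ∃ F' : MACCodeFamily ι κ 𝒳 𝒴 l d ι' κ', ∀ s, (C.concat F').avgError ρ s ≤ 8 * ε := by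
  obtain ⟨_, _⟩ := nonempty_of_avgError_lt_one
    ((hC fun _ => Classical.arbitrary 𝒮).trans_lt hε)
  obtain ⟨_, _⟩ := MACCodeFamily.nonempty_of_expectedError_lt_one hG₁ hG₂
    ((hF fun _ => Classical.arbitrary 𝒮).trans_lt hε)
  obtain ⟨g₁, g₂, hg⟩ := exists_sample_expect_expect_le hG₁ hG₂
    (fun γ₁ γ₂ s => (F.code γ₁ γ₂).avgError_mem_Icc s hρ) hF hι hκ
  refine ⟨F.compKeys g₁ g₂, fun s => ?_⟩
  calc (C.concat (F.compKeys g₁ g₂)).avgError ρ s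
      ≤ C.avgError ρ (fun t => s (.inl t)) +
          𝔼 i, 𝔼 j, (F.code (g₁ i) (g₂ j)).avgError ρ fun t => s (.inr t) :=
        C.avgError_concat_le _ hρ s
    _ ≤ ε + (4 * ε + 3 * ε) := add_le_add (hC _) (hg _)
    _ = 8 * ε := by ring

end MACCode

end MultipleAccessCodes

section Rates

/-- The rate, in bits per channel use, of `M` messages on a block of length `n`; it is `0` when
`n = 0` or `M = 0`. -/
def codeRate (n M : ℕ) : ℝ :=
  1 / (n : ℝ) * Real.logb 2 M

lemma eventually_mul_le_of_lt_codeRate {r : ℝ} (hr : 0 < r) (A : ℝ) :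
    ∀ᶠ k : ℕ in atTop, ∀ P : ℕ, r < codeRate k P → A * (k + 1) ≤ P := by
  have hbase : (1 : ℝ) < 2 ^ r := Real.one_lt_rpow one_lt_two hr
  have hlittleO : (fun k : ℕ => A * ((k : ℝ) + 1)) =o[atTop] fun k : ℕ => ((2 : ℝ) ^ r) ^ k := by
    have hlin : (fun k : ℕ => (k : ℝ)) =o[atTop] fun k : ℕ => ((2 : ℝ) ^ r) ^ k :=
      isLittleO_coe_const_pow_of_one_lt hbase
    have hconst : (fun _ : ℕ => (1 : ℝ)) =o[atTop] fun k : ℕ => ((2 : ℝ) ^ r) ^ k := by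
      simpa using isLittleO_pow_const_const_pow_of_one_lt (R := ℝ) 0 hbase
    exact (hlin.add hconst).const_mul_left A
  filter_upwards [hlittleO.bound one_pos, eventually_gt_atTop 0] with k hk hk0 P hP
  have hkpos : (0 : ℝ) < k := by exact_mod_cast hk0
  have hlogb : r * k < Real.logb 2 P := by
    rwa [codeRate, one_div, lt_inv_mul_iff₀ hkpos, mul_comm] at hP
  have hPpos : (0 : ℝ) < P := by
    refine (Nat.cast_nonneg P).lt_of_ne fun h => ?_
    rw [← h, Real.logb_zero] at hlogb
    exact hlogb.not_ge (by positivity)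
  calc A * ((k : ℝ) + 1) ≤ ((2 : ℝ) ^ r) ^ k := by
        rw [one_mul, Real.norm_of_nonneg (show (0 : ℝ) ≤ ((2 : ℝ) ^ r) ^ k by positivity)] at hk
        exact (Real.le_norm_self _).trans hk
    _ = 2 ^ (r * k) := by rw [Real.rpow_mul zero_le_two, Real.rpow_natCast]
    _ ≤ P := ((Real.lt_logb_iff_rpow_lt one_lt_two hPpos).mp hlogb).le

lemma sub_lt_codeRate_add_mul {k l q P M : ℕ} {R δ : ℝ} (hδ : 0 ≤ δ) (hq : 2 * R ≤ q * δ)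
    (hqk : q * k ≤ k + l) (hl : 0 < l) (hP : 0 < P) (hM : 0 < M)
    (h : R - δ / 2 < codeRate l M) : R - δ < codeRate (k + l) (P * M) := by
  have hl' : (0 : ℝ) < l := by exact_mod_cast hl
  have hP' : (1 : ℝ) ≤ P := by exact_mod_cast hP
  have hM' : (M : ℝ) ≠ 0 := by exact_mod_cast hM.ne'
  have hqk' : (q : ℝ) * k ≤ k + l := by exact_mod_cast hqk
  have hlogM : l * (R - δ / 2) < Real.logb 2 M := by
    rwa [codeRate, one_div, lt_inv_mul_iff₀ hl'] at h
  have hlogP : 0 ≤ Real.logb 2 P := Real.logb_nonneg one_lt_two hP'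
  have hkey : k * R ≤ (k + l) * (δ / 2) := by
    nlinarith [mul_le_mul_of_nonneg_right hq k.cast_nonneg, mul_le_mul_of_nonneg_right hqk' hδ]
  rw [codeRate, one_div, lt_inv_mul_iff₀ (by positivity)]
  push_cast
  rw [Real.logb_mul (by positivity) hM']
  nlinarith [mul_nonneg k.cast_nonneg hδ]

lemma log_card_pi_le {S : Type*} [Fintype S] {k l q : ℕ} (hl : l ≤ q * (k + 1)) {ε P : ℝ}
    (hε : 0 < ε) (hP : q * Real.log (Fintype.card S) / ε * (k + 1) ≤ P) :
    Real.log (Fintype.card (Fin l → S)) ≤ ε * P := by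
  have hl' : (l : ℝ) ≤ q * (k + 1) := by exact_mod_cast hl
  calc Real.log (Fintype.card (Fin l → S)) = l * Real.log (Fintype.card S) := by
        rw [Fintype.card_fun, Fintype.card_fin, Nat.cast_pow, Real.log_pow]
    _ ≤ q * (k + 1) * Real.log (Fintype.card S) :=
        mul_le_mul_of_nonneg_right hl' (Real.log_natCast_nonneg _)
    _ = ε * (q * Real.log (Fintype.card S) / ε * (k + 1)) := by field_simp
    _ ≤ ε * P := mul_le_mul_of_nonneg_left hP hε.le

lemma eventually_exists_add_eq {q : ℕ} (hq : 2 ≤ q) {p r : ℕ → Prop} (hp : ∀ᶠ k in atTop, p k)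
    (hr : ∀ᶠ l in atTop, r l) :
    ∀ᶠ n in atTop, ∃ k l, k + l = n ∧ q * k ≤ n ∧ n ≤ q * (k + 1) ∧ p k ∧ r l := by
  have hq0 : 0 < q := by omega
  have hk : Tendsto (fun n => n / q) atTop atTop := Nat.tendsto_div_const_atTop hq0.ne'
  have hkl (n : ℕ) : n / q ≤ n - n / q := by
    have := Nat.div_le_div_left hq two_pos (a := n)
    omega
  have hl : Tendsto (fun n => n - n / q) atTop atTop := tendsto_atTop_mono hkl hk
  filter_upwards [hk.eventually hp, hl.eventually hr] with n hpn hrn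
  exact ⟨n / q, n - n / q, Nat.add_sub_cancel' (Nat.div_le_self n q), Nat.mul_div_le n q,
    (Nat.lt_mul_div_succ n hq0).le, hpn, hrn⟩

end Rates

section Capacity

variable {𝒳 𝒴 𝒮 : Type*} {D : ℕ} {ρ : 𝒳 → 𝒴 → 𝒮 → Matrix (Fin D) (Fin D) ℂ} {R₁ R₂ : ℝ}

lemma achievableDet_iff [Finite 𝒮] [Nonempty 𝒮] : AchievableDet ρ R₁ R₂ ↔ 0 ≤ R₁ ∧ 0 ≤ R₂ ∧
    ∀ β > 0, ∀ δ₁ > 0, ∀ δ₂ > 0, ∀ᶠ n : ℕ in atTop,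
      ∃ (M₁ M₂ : ℕ) (C : MACCode 𝒳 𝒴 (Fin n) (Fin D) (Fin M₁) (Fin M₂)),
        R₁ - δ₁ < codeRate n M₁ ∧ R₂ - δ₂ < codeRate n M₂ ∧ ∀ s, C.avgError ρ s < β := by
  simp only [AchievableDet, eventually_atTop, ciSup_lt_iff_of_finite]
  refine and_congr_right' (and_congr_right' ?_)
  refine forall₂_congr fun β _ => forall₂_congr fun δ₁ _ => forall₂_congr fun δ₂ _ =>
    exists_congr fun N => forall₂_congr fun n _ => exists₂_congr fun M₁ M₂ => ⟨?_, ?_⟩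
  · rintro ⟨f₁, f₂, E, hpos, hsum, hM₁, hM₂, herr⟩
    refine ⟨⟨f₁, f₂, fun p => E p.1 p.2, fun p => hpos p.1 p.2,
      (Fintype.sum_prod_type _).trans hsum⟩, hM₁, hM₂, fun s => ?_⟩
    rw [MACCode.avgError_eq_one_sub_sum, Fintype.card_fin, Fintype.card_fin]
    exact herr s
  · rintro ⟨C, hM₁, hM₂, herr⟩
    refine ⟨C.enc₁, C.enc₂, fun i j => C.dec (i, j), fun i j => C.isPOVM_dec.1 (i, j),
      (Fintype.sum_prod_type _).symm.trans C.isPOVM_dec.2, hM₁, hM₂, fun s => ?_⟩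
    have h := herr s
    rw [MACCode.avgError_eq_one_sub_sum, Fintype.card_fin, Fintype.card_fin] at h
    exact h

lemma AchievableRand.eventually_exists_codeFamily [Finite 𝒮] [Nonempty 𝒮]
    (h : AchievableRand ρ R₁ R₂) {β δ₁ δ₂ : ℝ} (hβ : 0 < β) (hδ₁ : 0 < δ₁) (hδ₂ : 0 < δ₂) :
    ∀ᶠ n : ℕ in atTop, ∃ (M₁ M₂ c₁ c₂ : ℕ)
      (F : MACCodeFamily (Fin c₁) (Fin c₂) 𝒳 𝒴 (Fin n) (Fin D) (Fin M₁) (Fin M₂)),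
      ∃ G₁ ∈ stdSimplex ℝ (Fin c₁), ∃ G₂ ∈ stdSimplex ℝ (Fin c₂),
        R₁ - δ₁ < codeRate n M₁ ∧ R₂ - δ₂ < codeRate n M₂ ∧
          ∀ s, F.expectedError G₁ G₂ ρ s < β := by
  refine eventually_atTop.mpr ((h.2.2 β hβ δ₁ hδ₁ δ₂ hδ₂).imp fun N hN n hn => ?_)
  obtain ⟨M₁, M₂, c₁, c₂, G₁, G₂, f₁, f₂, E, hG₁, hG₁', hG₂, hG₂', hpos, hsum, hM₁, hM₂, herr⟩ :=
    hN n hn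
  refine ⟨M₁, M₂, c₁, c₂, ⟨f₁, f₂, fun γ₁ γ₂ p => E γ₁ γ₂ p.1 p.2, fun γ₁ γ₂ =>
    ⟨fun p => hpos γ₁ γ₂ p.1 p.2, (Fintype.sum_prod_type _).trans (hsum γ₁ γ₂)⟩⟩,
    G₁, ⟨hG₁, hG₁'⟩, G₂, ⟨hG₂, hG₂'⟩, hM₁, hM₂, fun s => ?_⟩
  simp only [MACCodeFamily.expectedError, MACCode.avgError_eq_one_sub_sum, Fintype.card_fin]
  exact ciSup_lt_iff_of_finite.mp herr s

lemma AchievableDet.eventually_exists_code_mul_le_card [Finite 𝒮] [Nonempty 𝒮]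
    (h : AchievableDet ρ R₁ R₂) (hR₁ : 0 < R₁) (hR₂ : 0 < R₂) {β : ℝ} (hβ : 0 < β) (A : ℝ) :
    ∀ᶠ k : ℕ in atTop, ∃ (P₁ P₂ : ℕ) (C : MACCode 𝒳 𝒴 (Fin k) (Fin D) (Fin P₁) (Fin P₂)),
      A * (k + 1) ≤ P₁ ∧ A * (k + 1) ≤ P₂ ∧ ∀ s, C.avgError ρ s < β := by
  filter_upwards [(achievableDet_iff.mp h).2.2 β hβ _ (half_pos hR₁) _ (half_pos hR₂),
    eventually_mul_le_of_lt_codeRate (half_pos hR₁) A,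
    eventually_mul_le_of_lt_codeRate (half_pos hR₂) A] with k hk hP₁ hP₂
  obtain ⟨P₁, P₂, C, hrate₁, hrate₂, hC⟩ := hk
  rw [sub_half] at hrate₁ hrate₂
  exact ⟨P₁, P₂, C, hP₁ P₁ hrate₁, hP₂ P₂ hrate₂, hC⟩

lemma exists_nat_two_le_and_two_mul_le_mul {δ₁ δ₂ : ℝ} (hδ₁ : 0 < δ₁) (hδ₂ : 0 < δ₂)
    (R₁ R₂ : ℝ) : ∃ q : ℕ, 2 ≤ q ∧ 2 * R₁ ≤ q * δ₁ ∧ 2 * R₂ ≤ q * δ₂ := by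
  have hlarge (R : ℝ) {δ : ℝ} (hδ : 0 < δ) : ∀ᶠ q : ℕ in atTop, 2 * R ≤ q * δ :=
    (tendsto_natCast_atTop_atTop.atTop_mul_const hδ).eventually_ge_atTop _
  exact ((eventually_ge_atTop 2).and ((hlarge R₁ hδ₁).and (hlarge R₂ hδ₂))).exists

theorem AchievableRand.achievableDet [Finite 𝒮] [Nonempty 𝒮]
    (hρ : ∀ x y s, IsDensity (ρ x y s)) {r₁ r₂ : ℝ} (hr₁ : 0 < r₁) (hr₂ : 0 < r₂)
    (hdet : AchievableDet ρ r₁ r₂) (hrand : AchievableRand ρ R₁ R₂) : AchievableDet ρ R₁ R₂ := by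
  cases nonempty_fintype 𝒮
  refine achievableDet_iff.mpr ⟨hrand.1, hrand.2.1, fun β hβ δ₁ hδ₁ δ₂ hδ₂ => ?_⟩
  obtain ⟨ε, hε0, hε⟩ : ∃ ε : ℝ, 0 < ε ∧ 8 * ε < min 1 β :=
    ⟨min 1 β / 16, by positivity, by linarith [lt_min one_pos hβ]⟩
  obtain ⟨hε1, hεβ⟩ := lt_min_iff.mp hε
  obtain ⟨q, hq, hqR₁, hqR₂⟩ := exists_nat_two_le_and_two_mul_le_mul hδ₁ hδ₂ R₁ R₂
  have hkeyCode := hdet.eventually_exists_code_mul_le_card hr₁ hr₂ hε0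
    (q * Real.log (Fintype.card 𝒮) / ε)
  have hcodeFamily := (eventually_gt_atTop 0).and
    (hrand.eventually_exists_codeFamily hε0 (half_pos hδ₁) (half_pos hδ₂))
  filter_upwards [eventually_exists_add_eq hq hkeyCode hcodeFamily] with n hn
  obtain ⟨k, l, rfl, hqk, hkq, ⟨P₁, P₂, C, hP₁, hP₂, hC⟩,
    hl, M₁, M₂, c₁, c₂, F, G₁, hG₁, G₂, hG₂, hM₁, hM₂, hF⟩ := hn
  have hlq : l ≤ q * (k + 1) := by omega
  obtain ⟨F', hF'⟩ := MACCode.exists_concat_avgError_le hρ (by linarith) C (fun s => (hC s).le) F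
    hG₁ hG₂ (fun s => (hF s).le) (by simpa using log_card_pi_le hlq hε0 hP₁)
    (by simpa using log_card_pi_le hlq hε0 hP₂)
  obtain ⟨⟨i, i'⟩, ⟨j, j'⟩⟩ := MACCode.nonempty_of_avgError_lt_one
    ((hF' fun _ => Classical.arbitrary 𝒮).trans_lt hε1)
  refine ⟨P₁ * M₁, P₂ * M₂, (C.concat F').relabel finProdFinEquiv finProdFinEquiv finSumFinEquiv,
    sub_lt_codeRate_add_mul hδ₁.le hqR₁ hqk hl i.pos i'.pos hM₁,
    sub_lt_codeRate_add_mul hδ₂.le hqR₂ hqk hl j.pos j'.pos hM₂, fun s => ?_⟩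
  rw [MACCode.avgError_relabel]
  exact (hF' _).trans_lt hεβ

lemma exists_pos_achievableDet (h : (interior (Rd ρ)).Nonempty) :
    ∃ r : ℝ × ℝ, 0 < r.1 ∧ 0 < r.2 ∧ AchievableDet ρ r.1 r.2 := by
  obtain ⟨r, hr, hpos⟩ := inter_interior_nonempty_of_interior_closure
    (B := Set.Ici 0 ×ˢ Set.Ici 0) (fun r hr => ⟨hr.1, hr.2.1⟩) (isClosed_Ici.prod isClosed_Ici) h
  rw [interior_prod_eq, interior_Ici, Set.mem_prod] at hpos
  exact ⟨r, hpos.1, hpos.2, hr⟩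

end Capacity

theorem statement14_general {𝒳 𝒴 𝒮 : Type*} [Finite 𝒮] [Nonempty 𝒮] {d : ℕ}
    (ρ : 𝒳 → 𝒴 → 𝒮 → Matrix (Fin d) (Fin d) ℂ) (hρ : ∀ x y s, IsDensity (ρ x y s))
    (hInt : (interior (Rd ρ)).Nonempty) : Rr ρ ⊆ Rd ρ := by
  obtain ⟨r, hr₁, hr₂, hr⟩ := exists_pos_achievableDet hInt
  exact closure_mono fun R hR => AchievableRand.achievableDet hρ hr₁ hr₂ hr hR

/-- For finite `𝒮`: if the interior of the deterministic code capacity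
region `ℛ_d` is nonempty, then `ℛ_r ⊆ ℛ_d`. -/
theorem statement14 {𝒳 𝒴 𝒮 : Type*} [Fintype 𝒳] [DecidableEq 𝒳] [Fintype 𝒴] [DecidableEq 𝒴]
    [Fintype 𝒮] [Nonempty 𝒮] {d : ℕ}
    (ρ : 𝒳 → 𝒴 → 𝒮 → Matrix (Fin d) (Fin d) ℂ)
    (hρ : ∀ x y s, IsDensity (ρ x y s))
    (hInt : (interior (Rd ρ)).Nonempty) :
    Rr ρ ⊆ Rd ρ :=
  statement14_general ρ hρ hInt
end
end

section
/- Let Γ be a nonempty finite set with a probability distribution G on it, let T be a nonempty finite set, let μ > 0, and let K be a positive integer with |T|·e^{−μK} < 1. Suppose that for each s∈T a function e_s : Γ → [0,1] is given with Σ_{γ∈Γ} G(γ)·e_s(γ) ≤ (e^{μ}−1)/e². Then there exist γ₁,…,γ_K ∈ Γ such that (1/K)·Σ_{k=1}^{K} e_s(γ_k) ≤ μ for every s∈T. -/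
/-!
Draw the `γ_k` independently with law `G`. Convexity of `exp` bounds the moment generating function
of a `[0, 1]`-valued variable of mean at most `(e^μ - 1) / e²` by `e^μ` at the parameter `2`, so the
Chernoff bound at that parameter gives each `s` a failure probability of at most
`e^{-2μK} (e^μ)^K = e^{-μK}`. By the union bound, with positive probability no `s` fails.
-/

section Selection

open MeasureTheory ProbabilityTheory Real

variable {Ω : Type*} [MeasurableSpace Ω] {P : Measure Ω} {X : Ω → ℝ} {t : ℝ}

theorem exp_mul_le_one_add_exp_sub_one_mul {x : ℝ} (hx : x ∈ Set.Icc 0 1) :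
    exp (t * x) ≤ 1 + (exp t - 1) * x := by
  have chord := convexOn_exp.2 (Set.mem_univ 0) (Set.mem_univ t)
    (sub_nonneg.2 hx.2) hx.1 (sub_add_cancel 1 x)
  simp only [smul_eq_mul, mul_zero, zero_add, exp_zero, mul_one] at chord
  rw [mul_comm t x]
  linarith

theorem mgf_le_one_add_exp_sub_one_mul_integral [IsProbabilityMeasure P]
    (hX : AEMeasurable X P) (hX01 : ∀ᵐ ω ∂P, X ω ∈ Set.Icc 0 1) :
    mgf X P t ≤ 1 + (exp t - 1) * P[X] := by
  have hXint : Integrable X P := Integrable.of_mem_Icc 0 1 hX hX01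
  calc mgf X P t ≤ ∫ ω, (1 + (exp t - 1) * X ω) ∂P :=
        integral_mono_ae (integrable_exp_mul_of_mem_Icc hX hX01)
          ((integrable_const 1).add (hXint.const_mul _))
          (hX01.mono fun _ ↦ exp_mul_le_one_add_exp_sub_one_mul)
    _ = 1 + (exp t - 1) * P[X] := by
        rw [integral_add (integrable_const 1) (hXint.const_mul _), integral_const_mul,
          integral_const, probReal_univ, one_smul]

theorem mgf_le_exp_of_integral_le [IsProbabilityMeasure P] {c : ℝ}
    (hX : AEMeasurable X P) (hX01 : ∀ᵐ ω ∂P, X ω ∈ Set.Icc 0 1)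
    (hmean : P[X] ≤ (exp c - 1) / exp t) :
    mgf X P t ≤ exp c := by
  have mean_nonneg : 0 ≤ P[X] := integral_nonneg_of_ae (hX01.mono fun _ h ↦ h.1)
  have exp_mul_mean_le : P[X] * exp t ≤ exp c - 1 := (le_div_iff₀ (exp_pos t)).1 hmean
  linarith [mgf_le_one_add_exp_sub_one_mul_integral (t := t) hX hX01]

section Pi

variable {ι : Type*} [Fintype ι]

theorem mgf_sum_comp_eval_pi [SigmaFinite P] :
    mgf (fun ω : ι → Ω ↦ ∑ i, X (ω i)) (Measure.pi fun _ ↦ P) t =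
      mgf X P t ^ Fintype.card ι := by
  simp only [mgf, Finset.mul_sum, exp_sum]
  exact integral_fintype_prod_eq_pow fun ω ↦ exp (t * X ω)

theorem pi_real_le_sum_le_exp_mul_mgf_pow [IsFiniteMeasure P] (a : ℝ) (ht : 0 ≤ t)
    (hint : Integrable (fun ω ↦ exp (t * X ω)) P) :
    (Measure.pi fun _ : ι ↦ P).real {ω | a ≤ ∑ i, X (ω i)} ≤
      exp (-t * a) * mgf X P t ^ Fintype.card ι := by
  rw [← mgf_sum_comp_eval_pi]
  apply measure_ge_le_exp_mul_mgf a ht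
  simp only [Finset.mul_sum, exp_sum]
  exact Integrable.fintype_prod fun _ ↦ hint

theorem pi_real_le_sum_le_exp_of_integral_le [IsProbabilityMeasure P] {c : ℝ} (a : ℝ) (ht : 0 ≤ t)
    (hX : AEMeasurable X P) (hX01 : ∀ᵐ ω ∂P, X ω ∈ Set.Icc 0 1)
    (hmean : P[X] ≤ (exp c - 1) / exp t) :
    (Measure.pi fun _ : ι ↦ P).real {ω | a ≤ ∑ i, X (ω i)} ≤
      exp (-t * a + Fintype.card ι * c) := by
  calc (Measure.pi fun _ : ι ↦ P).real {ω | a ≤ ∑ i, X (ω i)}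
      ≤ exp (-t * a) * mgf X P t ^ Fintype.card ι :=
        pi_real_le_sum_le_exp_mul_mgf_pow a ht (integrable_exp_mul_of_mem_Icc hX hX01)
    _ ≤ exp (-t * a) * exp c ^ Fintype.card ι := by
        gcongr
        · exact mgf_nonneg
        · exact mgf_le_exp_of_integral_le hX hX01 hmean
    _ = exp (-t * a + Fintype.card ι * c) := by
        rw [exp_add, exp_nat_mul]

end Pi

theorem exists_forall_notMem_of_card_mul_lt_one [IsProbabilityMeasure P] {T : Type*} [Fintype T]
    {A : T → Set Ω} {δ : ℝ} (hA : ∀ s, P.real (A s) ≤ δ) (hδ : Fintype.card T * δ < 1) :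
    ∃ ω, ∀ s, ω ∉ A s := by
  have union_lt_one : P.real (⋃ s, A s) < 1 :=
    calc P.real (⋃ s, A s) ≤ ∑ s, P.real (A s) := measureReal_iUnion_fintype_le A
      _ ≤ Fintype.card T * δ := by
        simpa only [Finset.card_univ, nsmul_eq_mul] using
          Finset.sum_le_card_nsmul Finset.univ _ δ fun s _ ↦ hA s
      _ < 1 := hδ
  have union_ne_univ : ⋃ s, A s ≠ Set.univ := fun h ↦ by
    rw [h, probReal_univ] at union_lt_one
    exact union_lt_one.false
  simpa only [Set.mem_iUnion, not_exists] using (Set.ne_univ_iff_exists_notMem _).1 union_ne_univ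

theorem exists_isProbabilityMeasure_integral_eq_sum {Γ : Type*} [Fintype Γ] [MeasurableSpace Γ]
    [MeasurableSingletonClass Γ] {G : Γ → ℝ} (hG0 : ∀ γ, 0 ≤ G γ) (hG1 : ∑ γ, G γ = 1) :
    ∃ P : Measure Γ, IsProbabilityMeasure P ∧ ∀ f : Γ → ℝ, P[f] = ∑ γ, G γ * f γ := by
  have sum_ofReal : ∑ γ, ENNReal.ofReal (G γ) = 1 := by
    rw [← ENNReal.ofReal_sum_of_nonneg fun γ _ ↦ hG0 γ, hG1, ENNReal.ofReal_one]
  refine ⟨(PMF.ofFintype _ sum_ofReal).toMeasure, inferInstance, fun f ↦ ?_⟩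
  simp only [PMF.integral_eq_sum, PMF.ofFintype_apply, ENNReal.toReal_ofReal (hG0 _), smul_eq_mul]

theorem statement15_general [IsProbabilityMeasure P] {T : Type*} [Fintype T] {μ : ℝ} {K : ℕ}
    (hK : 0 < K) (hTK : Fintype.card T * exp (-(μ * K)) < 1) {e : T → Ω → ℝ}
    (he : ∀ s, AEMeasurable (e s) P) (he01 : ∀ s, ∀ᵐ ω ∂P, e s ω ∈ Set.Icc 0 1)
    (hmean : ∀ s, P[e s] ≤ (exp μ - 1) / exp 2) :
    ∃ g : Fin K → Ω, ∀ s, (1 / (K : ℝ)) * ∑ k, e s (g k) ≤ μ := by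
  have failure_le (s : T) :
      (Measure.pi fun _ : Fin K ↦ P).real {g | μ * K ≤ ∑ k, e s (g k)} ≤ exp (-(μ * K)) := by
    refine (pi_real_le_sum_le_exp_of_integral_le (μ * K) zero_le_two
      (he s) (he01 s) (hmean s)).trans_eq ?_
    rw [Fintype.card_fin]
    ring_nf
  obtain ⟨g, hg⟩ := exists_forall_notMem_of_card_mul_lt_one failure_le hTK
  refine ⟨g, fun s ↦ ?_⟩
  rw [one_div_mul_eq_div, div_le_iff₀ (Nat.cast_pos.2 hK)]
  exact (not_le.1 (hg s)).le

end Selection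

/-- derandomization selection lemma. If `Γ` is a nonempty finite
probability space, `T` a nonempty finite set, `μ > 0`, and `K` a positive integer with
`|T|·e^{−μK} < 1`, and each `e_s : Γ → [0,1]` has mean at most `(e^μ − 1)/e²`, then there
are `γ₁, …, γ_K ∈ Γ` whose empirical mean of `e_s` is at most `μ` for every `s ∈ T`. -/
theorem statement15 {Γ T : Type*} [Fintype Γ] [Nonempty Γ] [Fintype T] [Nonempty T]
    (G : Γ → ℝ) (hG0 : ∀ γ, 0 ≤ G γ) (hG1 : ∑ γ, G γ = 1)
    (μ : ℝ) (hμ : 0 < μ) (K : ℕ) (hK : 0 < K)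
    (hTK : (Fintype.card T : ℝ) * Real.exp (-(μ * K)) < 1)
    (e : T → Γ → ℝ) (he : ∀ s γ, e s γ ∈ Set.Icc (0 : ℝ) 1)
    (hmean : ∀ s, ∑ γ, G γ * e s γ ≤ (Real.exp μ - 1) / Real.exp 2) :
    ∃ g : Fin K → Γ, ∀ s, (1 / (K : ℝ)) * ∑ k, e s (g k) ≤ μ := by
  let : MeasurableSpace Γ := ⊤
  obtain ⟨P, _, hP⟩ := exists_isProbabilityMeasure_integral_eq_sum hG0 hG1
  exact statement15_general (P := P) hK hTK (fun _ ↦ measurable_from_top.aemeasurable)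
    (fun s ↦ .of_forall (he s)) fun s ↦ (hP (e s)).trans_le (hmean s)
end

section
/- Let N, A be positive integers, δ∈(0,1), ρ a density matrix on ℂ^N, and a, b unit vectors in ℂ^A. Let H' := ℂ^N ⊕ (ℂ^N⊗ℂ^A) ⊕ (ℂ^N⊗ℂ^A), let M : ℂ^N → H' be the isometry M(h) := (1/√(1+2δ²))·(h ⊕ δ·(h⊗a) ⊕ δ·(h⊗b)), and let ρ̃ be the operator on H' that acts as ρ on the first direct summand and as 0 on the other summands. Then ‖MρM† − ρ̃‖₁ ≤ 8δ, where ‖·‖₁ is the trace norm. -/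
open scoped ComplexOrder Matrix

noncomputable section

/-- Functional calculus for Hermitian matrices (junk value `0` on non-Hermitian input). -/
def matFun {m : Type*} [Fintype m] [DecidableEq m] (f : ℝ → ℝ) (A : Matrix m m ℂ) :
    Matrix m m ℂ :=
  if hA : A.IsHermitian then
    (hA.eigenvectorUnitary : Matrix m m ℂ) *
        Matrix.diagonal (fun i => (f (hA.eigenvalues i) : ℂ)) *
      star (hA.eigenvectorUnitary : Matrix m m ℂ)
  else 0

/-- The trace norm (sum of singular values) of a square matrix. -/
def traceNorm {m : Type*} [Fintype m] [DecidableEq m] (A : Matrix m m ℂ) : ℝ :=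
  (Matrix.trace (matFun Real.sqrt (Aᴴ * A))).re

/-- The index type of `H' = ℂ^N ⊕ (ℂ^N ⊗ ℂ^A) ⊕ (ℂ^N ⊗ ℂ^A)`. -/
abbrev TiltIdx (N A : ℕ) : Type := Fin N ⊕ (Fin N × Fin A) ⊕ (Fin N × Fin A)

/-- The tilting isometry `M : ℂ^N → H'`, `M(h) = (1+2δ²)^{-1/2}(h ⊕ δ h⊗a ⊕ δ h⊗b)`,
written as a matrix. -/
def tiltM (N A : ℕ) (δ : ℝ) (a b : Fin A → ℂ) :
    Matrix (TiltIdx N A) (Fin N) ℂ :=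
  Matrix.of fun p j =>
    ((1 / Real.sqrt (1 + 2 * δ ^ 2) : ℝ) : ℂ) *
      (match p with
        | Sum.inl i => if i = j then 1 else 0
        | Sum.inr (Sum.inl (i, r)) => (δ : ℂ) * (if i = j then 1 else 0) * a r
        | Sum.inr (Sum.inr (i, r)) => (δ : ℂ) * (if i = j then 1 else 0) * b r)

/-- The embedding of an `N×N`-matrix into `H'`, acting as `ρ` on the first direct
summand and as `0` elsewhere. -/
def padFirst (N A : ℕ) (ρ : Matrix (Fin N) (Fin N) ℂ) :
    Matrix (TiltIdx N A) (TiltIdx N A) ℂ :=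
  Matrix.of fun p q =>
    match p, q with
    | Sum.inl i, Sum.inl j => ρ i j
    | _, _ => 0

/-!
Write `V` for the tilting isometry at `δ = 0`, so that `ρ̃ = V ρ V†` and
`M ρ M† - V ρ V† = (M - V) ρ M† + V ρ (M - V)†`. The trace norm is dual to the operator norm, so it
is subadditive and satisfies `‖K X L‖₁ ≤ ‖K‖ ‖X‖₁ ‖L‖`, which bounds the difference by
`2 ‖M - V‖ ‖ρ‖₁`. Finally `(M - V)†(M - V) = 2 (1 - (1 + 2δ²)^{-1/2}) • 1`, hence
`‖M - V‖ ≤ √2 |δ|`.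
-/

section TraceNorm

open Matrix (isHermitian_conjTranspose_mul_self posSemidef_conjTranspose_mul_self toEuclideanCLM)
open scoped Matrix.Norms.L2Operator MatrixOrder

variable {m n : Type*} [Fintype m] [DecidableEq m] [Fintype n] [DecidableEq n]

lemma matFun_eq_cfc {A : Matrix m m ℂ} (hA : A.IsHermitian) (f : ℝ → ℝ) :
    matFun f A = cfc f A := by
  rw [hA.cfc_eq, Matrix.IsHermitian.cfc, Unitary.conjStarAlgAut_apply, matFun, dif_pos hA]
  rfl

lemma traceNorm_eq_re_trace_cfc_sqrt (X : Matrix m m ℂ) :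
    traceNorm X = (cfc Real.sqrt (Xᴴ * X)).trace.re := by
  rw [traceNorm, matFun_eq_cfc (isHermitian_conjTranspose_mul_self X)]

lemma traceNorm_eq_re_trace_abs (X : Matrix m m ℂ) : traceNorm X = (CFC.abs X).trace.re := by
  rw [traceNorm_eq_re_trace_cfc_sqrt, CFC.abs, Matrix.star_eq_conjTranspose,
    CFC.sqrt_eq_real_sqrt _ (posSemidef_conjTranspose_mul_self X).nonneg, cfcₙ_eq_cfc]

lemma traceNorm_of_posSemidef {ρ : Matrix m m ℂ} (hρ : ρ.PosSemidef) :
    traceNorm ρ = ρ.trace.re := by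
  rw [traceNorm_eq_re_trace_abs, CFC.abs_of_nonneg ρ hρ.nonneg]

lemma traceNorm_eq_sum_sqrt_eigenvalues (X : Matrix m m ℂ) :
    traceNorm X = ∑ i, √((isHermitian_conjTranspose_mul_self X).eigenvalues i) := by
  rw [traceNorm, matFun, dif_pos (isHermitian_conjTranspose_mul_self X), Matrix.trace_mul_comm,
    ← mul_assoc, Unitary.coe_star_mul_self, one_mul, Matrix.trace_diagonal, ← Complex.ofReal_sum,
    Complex.ofReal_re]

lemma traceNorm_nonneg (X : Matrix m m ℂ) : 0 ≤ traceNorm X := by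
  rw [traceNorm_eq_sum_sqrt_eigenvalues]
  positivity

lemma norm_toEuclideanCLM_eigenvectorBasis (X : Matrix m m ℂ) (i : m) :
    ‖toEuclideanCLM (𝕜 := ℂ) X ((isHermitian_conjTranspose_mul_self X).eigenvectorBasis i)‖ =
      √((isHermitian_conjTranspose_mul_self X).eigenvalues i) := by
  set hX := isHermitian_conjTranspose_mul_self X
  set u := hX.eigenvectorBasis i
  have hu : toEuclideanCLM (𝕜 := ℂ) (Xᴴ * X) u = hX.eigenvalues i • u :=
    WithLp.ofLp_injective 2 (hX.mulVec_eigenvectorBasis i)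
  have hadjoint : (ContinuousLinearMap.adjoint (toEuclideanCLM (𝕜 := ℂ) X)).comp
      (toEuclideanCLM (𝕜 := ℂ) X) = toEuclideanCLM (𝕜 := ℂ) (Xᴴ * X) := by
    rw [map_mul, ← Matrix.star_eq_conjTranspose, map_star]
    rfl
  rw [ContinuousLinearMap.apply_norm_eq_sqrt_inner_adjoint_right, hadjoint, hu]
  simp [u, inner_smul_right_eq_smul]

lemma trace_eq_sum_inner_toEuclideanCLM (X : Matrix m m ℂ)
    (u : OrthonormalBasis m ℂ (EuclideanSpace ℂ m)) :
    X.trace = ∑ i, inner ℂ (u i) (toEuclideanCLM (𝕜 := ℂ) X (u i)) := by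
  rw [← Matrix.trace_toLin_eq X (EuclideanSpace.basisFun m ℂ).toBasis,
    LinearMap.trace_eq_sum_inner _ u]
  rfl

lemma re_trace_mul_le_norm_mul_traceNorm (Y X : Matrix m m ℂ) :
    (Y * X).trace.re ≤ ‖Y‖ * traceNorm X := by
  let T := toEuclideanCLM (𝕜 := ℂ) (n := m)
  let u := (isHermitian_conjTranspose_mul_self X).eigenvectorBasis
  have hinner (i : m) : (inner ℂ (u i) (T (Y * X) (u i))).re ≤ ‖Y‖ * ‖T X (u i)‖ :=
    calc (inner ℂ (u i) (T (Y * X) (u i))).re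
      _ ≤ ‖u i‖ * ‖T (Y * X) (u i)‖ := re_inner_le_norm (𝕜 := ℂ) _ _
      _ = ‖T Y (T X (u i))‖ := by rw [u.norm_eq_one, one_mul, map_mul]; rfl
      _ ≤ ‖Y‖ * ‖T X (u i)‖ := (T Y).le_opNorm _
  calc (Y * X).trace.re
    _ = ∑ i, (inner ℂ (u i) (T (Y * X) (u i))).re := by
        rw [trace_eq_sum_inner_toEuclideanCLM _ u, Complex.re_sum]
    _ ≤ ∑ i, ‖Y‖ * ‖T X (u i)‖ := Finset.sum_le_sum fun i _ ↦ hinner i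
    _ = ‖Y‖ * traceNorm X := by
        simp only [T, u, norm_toEuclideanCLM_eigenvectorBasis, ← Finset.mul_sum,
          traceNorm_eq_sum_sqrt_eigenvalues]

-- The witness is `|X|⁻¹ * Xᴴ`; the convention `0⁻¹ = 0` makes `|X|⁻¹` vanish on the kernel of `X`.
lemma exists_norm_le_one_traceNorm_eq_re_trace_mul (X : Matrix m m ℂ) :
    ∃ W : Matrix m m ℂ, ‖W‖ ≤ 1 ∧ traceNorm X = (W * X).trace.re := by
  set P := Xᴴ * X with hP
  have hPsa : IsSelfAdjoint P := isHermitian_conjTranspose_mul_self X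
  have hcont (f : ℝ → ℝ) : ContinuousOn f (spectrum ℝ P) := P.finite_real_spectrum.continuousOn f
  set Q := cfc (fun x : ℝ ↦ (√x)⁻¹) P
  have hQ : Qᴴ = Q := cfc_predicate (fun x : ℝ ↦ (√x)⁻¹) P
  have hQP : Q * P = cfc Real.sqrt P := by
    conv_lhs => rw [← cfc_id' ℝ P, ← cfc_mul _ _ P (hcont _) (hcont _)]
    refine cfc_congr fun x _ ↦ ?_
    simp only [inv_mul_eq_div, Real.div_sqrt]
  have hQPQ : ‖Q * P * Q‖ ≤ 1 := by
    rw [hQP, ← cfc_mul _ _ P (hcont _) (hcont _)]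
    refine norm_cfc_le zero_le_one fun x _ ↦ ?_
    rw [Real.norm_of_nonneg (by positivity)]
    exact mul_inv_le_one
  refine ⟨Q * Xᴴ, ?_, ?_⟩
  · have hW : (Q * Xᴴ) * star (Q * Xᴴ) = Q * P * Q := by
      simp only [Matrix.star_eq_conjTranspose, Matrix.conjTranspose_mul,
        Matrix.conjTranspose_conjTranspose, hQ, hP, mul_assoc]
    rwa [← hW, CStarRing.norm_self_mul_star, ← sq, sq_le_one_iff₀ (norm_nonneg _)] at hQPQ
  · rw [mul_assoc, ← hP, hQP, traceNorm_eq_re_trace_cfc_sqrt]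

lemma traceNorm_add_le (X Y : Matrix m m ℂ) : traceNorm (X + Y) ≤ traceNorm X + traceNorm Y := by
  obtain ⟨W, hW, hWXY⟩ := exists_norm_le_one_traceNorm_eq_re_trace_mul (X + Y)
  have hWZ (Z : Matrix m m ℂ) : (W * Z).trace.re ≤ traceNorm Z :=
    (re_trace_mul_le_norm_mul_traceNorm W Z).trans
      (mul_le_of_le_one_left (traceNorm_nonneg Z) hW)
  rw [hWXY, mul_add, Matrix.trace_add, Complex.add_re]
  exact add_le_add (hWZ X) (hWZ Y)

lemma traceNorm_mul_mul_le (K : Matrix n m ℂ) (X : Matrix m m ℂ) (L : Matrix m n ℂ) :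
    traceNorm (K * X * L) ≤ ‖K‖ * traceNorm X * ‖L‖ := by
  obtain ⟨W, hW, hWKXL⟩ := exists_norm_le_one_traceNorm_eq_re_trace_mul (K * X * L)
  have hLWK : ‖L * W * K‖ ≤ ‖L‖ * ‖K‖ :=
    calc ‖L * W * K‖
      _ ≤ ‖L‖ * ‖W‖ * ‖K‖ := by grw [Matrix.l2_opNorm_mul, Matrix.l2_opNorm_mul]
      _ ≤ ‖L‖ * ‖K‖ := by grw [hW, mul_one]
  calc traceNorm (K * X * L)
    _ = (L * W * K * X).trace.re := by
        rw [hWKXL, ← Matrix.mul_assoc, Matrix.trace_mul_comm]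
        simp only [Matrix.mul_assoc]
    _ ≤ ‖L * W * K‖ * traceNorm X := re_trace_mul_le_norm_mul_traceNorm _ _
    _ ≤ ‖L‖ * ‖K‖ * traceNorm X := mul_le_mul_of_nonneg_right hLWK (traceNorm_nonneg X)
    _ = ‖K‖ * traceNorm X * ‖L‖ := by ring

lemma traceNorm_conj_sub_conj_le (K L : Matrix n m ℂ) (X : Matrix m m ℂ) :
    traceNorm (K * X * Kᴴ - L * X * Lᴴ) ≤ (‖K‖ + ‖L‖) * ‖K - L‖ * traceNorm X := by
  have hsplit : K * X * Kᴴ - L * X * Lᴴ = (K - L) * X * Kᴴ + L * X * (K - L)ᴴ := by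
    simp only [Matrix.conjTranspose_sub, Matrix.sub_mul, Matrix.mul_sub]
    abel
  calc traceNorm (K * X * Kᴴ - L * X * Lᴴ)
    _ ≤ traceNorm ((K - L) * X * Kᴴ) + traceNorm (L * X * (K - L)ᴴ) :=
        hsplit ▸ traceNorm_add_le _ _
    _ ≤ ‖K - L‖ * traceNorm X * ‖Kᴴ‖ + ‖L‖ * traceNorm X * ‖(K - L)ᴴ‖ :=
        add_le_add (traceNorm_mul_mul_le _ _ _) (traceNorm_mul_mul_le _ _ _)
    _ = (‖K‖ + ‖L‖) * ‖K - L‖ * traceNorm X := by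
        rw [Matrix.l2_opNorm_conjTranspose, Matrix.l2_opNorm_conjTranspose]
        ring

end TraceNorm

section Tilt

open scoped Matrix.Norms.L2Operator

lemma norm_sq_le_norm_of_conjTranspose_mul_self_eq_smul_one {m n : Type*} [Fintype m]
    [DecidableEq m] [Fintype n] {K : Matrix n m ℂ} {c : ℂ} (hK : Kᴴ * K = c • 1) :
    ‖K‖ ^ 2 ≤ ‖c‖ := by
  rw [sq, ← Matrix.l2_opNorm_conjTranspose_mul_self, hK, Matrix.smul_one_eq_diagonal,
    Matrix.l2_opNorm_diagonal]
  exact pi_norm_const_le c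

/-- The matrix of `h ↦ h ⊗ v` from `ℂ^ι` to `ℂ^ι ⊗ ℂ^κ`, indexed by `ι × κ`; the lower blocks of
`tiltM` are multiples of such matrices. -/
def tensorVec (ι : Type*) [DecidableEq ι] {κ : Type*} (v : κ → ℂ) : Matrix (ι × κ) ι ℂ :=
  Matrix.of fun p j ↦ if p.1 = j then v p.2 else 0

lemma conjTranspose_tensorVec_mul_self (ι : Type*) [Fintype ι] [DecidableEq ι] {κ : Type*}
    [Fintype κ] (v : κ → ℂ) :
    (tensorVec ι v)ᴴ * tensorVec ι v = ((∑ r, ‖v r‖ ^ 2 : ℝ) : ℂ) • 1 := by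
  ext i j
  by_cases hij : i = j
  · simp [tensorVec, Matrix.mul_apply, Fintype.sum_prod_type, hij, Complex.conj_mul', apply_ite]
  · simp [tensorVec, Matrix.mul_apply, Fintype.sum_prod_type, hij, Ne.symm hij]

variable {N A : ℕ} (δ ε : ℝ) {a b : Fin A → ℂ}

lemma tiltM_eq_smul_fromRows (a b : Fin A → ℂ) :
    tiltM N A δ a b = (((√(1 + 2 * δ ^ 2))⁻¹ : ℝ) : ℂ) •
      Matrix.fromRows 1 (Matrix.fromRows ((δ : ℂ) • tensorVec (Fin N) a)
        ((δ : ℂ) • tensorVec (Fin N) b)) := by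
  ext p j
  rcases p with i | ⟨i, r⟩ | ⟨i, r⟩ <;> simp [tiltM, tensorVec, Matrix.one_apply]

lemma conjTranspose_tiltM_mul_tiltM
    (ha : ∑ r, ‖a r‖ ^ 2 = (1 : ℝ)) (hb : ∑ r, ‖b r‖ ^ 2 = (1 : ℝ)) :
    (tiltM N A δ a b)ᴴ * tiltM N A ε a b =
      (((1 + 2 * δ * ε) / (√(1 + 2 * δ ^ 2) * √(1 + 2 * ε ^ 2)) : ℝ) : ℂ) • 1 := by
  have hav := conjTranspose_tensorVec_mul_self (Fin N) a
  have hbv := conjTranspose_tensorVec_mul_self (Fin N) b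
  rw [ha, Complex.ofReal_one, one_smul] at hav
  rw [hb, Complex.ofReal_one, one_smul] at hbv
  simp only [tiltM_eq_smul_fromRows, Matrix.conjTranspose_smul, Matrix.smul_mul, Matrix.mul_smul,
    Matrix.conjTranspose_fromRows_eq_fromCols_conjTranspose, Matrix.fromCols_mul_fromRows,
    Matrix.conjTranspose_one, one_mul, hav, hbv, Complex.star_def, Complex.conj_ofReal]
  module

lemma padFirst_eq_tiltM_zero_conj (a b : Fin A → ℂ) (ρ : Matrix (Fin N) (Fin N) ℂ) :
    padFirst N A ρ = tiltM N A 0 a b * ρ * (tiltM N A 0 a b)ᴴ := by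
  ext p q
  rcases p with i | ⟨i, r⟩ | ⟨i, r⟩ <;> rcases q with j | ⟨j, s⟩ | ⟨j, s⟩ <;>
    simp [padFirst, tiltM, Matrix.mul_apply]

lemma conjTranspose_tiltM_mul_self
    (ha : ∑ r, ‖a r‖ ^ 2 = (1 : ℝ)) (hb : ∑ r, ‖b r‖ ^ 2 = (1 : ℝ)) :
    (tiltM N A δ a b)ᴴ * tiltM N A δ a b = 1 := by
  rw [conjTranspose_tiltM_mul_tiltM δ δ ha hb, Real.mul_self_sqrt (by positivity), mul_assoc, ← sq,
    div_self (by positivity), Complex.ofReal_one, one_smul]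

lemma norm_tiltM_le_one (ha : ∑ r, ‖a r‖ ^ 2 = (1 : ℝ)) (hb : ∑ r, ‖b r‖ ^ 2 = (1 : ℝ)) :
    ‖tiltM N A δ a b‖ ≤ 1 := by
  have hM : (tiltM N A δ a b)ᴴ * tiltM N A δ a b = (1 : ℂ) • 1 := by
    rw [conjTranspose_tiltM_mul_self δ ha hb, one_smul]
  have hsq := norm_sq_le_norm_of_conjTranspose_mul_self_eq_smul_one hM
  rwa [norm_one, sq_le_one_iff₀ (norm_nonneg _)] at hsq

lemma conjTranspose_tiltM_sub_tiltM_zero_mul_self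
    (ha : ∑ r, ‖a r‖ ^ 2 = (1 : ℝ)) (hb : ∑ r, ‖b r‖ ^ 2 = (1 : ℝ)) :
    (tiltM N A δ a b - tiltM N A 0 a b)ᴴ * (tiltM N A δ a b - tiltM N A 0 a b) =
      ((2 * (1 - (√(1 + 2 * δ ^ 2))⁻¹) : ℝ) : ℂ) • 1 := by
  rw [Matrix.conjTranspose_sub, Matrix.sub_mul, Matrix.mul_sub, Matrix.mul_sub,
    conjTranspose_tiltM_mul_self δ ha hb, conjTranspose_tiltM_mul_self 0 ha hb,
    conjTranspose_tiltM_mul_tiltM δ 0 ha hb, conjTranspose_tiltM_mul_tiltM 0 δ ha hb]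
  simp only [mul_zero, zero_mul, add_zero, ne_eq, OfNat.ofNat_ne_zero, not_false_eq_true, zero_pow,
    Real.sqrt_one, mul_one, one_mul, one_div, Complex.ofReal_mul, Complex.ofReal_ofNat,
    Complex.ofReal_sub, Complex.ofReal_one]
  module

lemma inv_sqrt_one_add_two_mul_sq_le_one : (√(1 + 2 * δ ^ 2))⁻¹ ≤ 1 :=
  inv_le_one_of_one_le₀ (Real.one_le_sqrt.2 (by nlinarith))

lemma one_sub_sq_le_inv_sqrt_one_add_two_mul_sq : 1 - δ ^ 2 ≤ (√(1 + 2 * δ ^ 2))⁻¹ := by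
  have hsqrt : √(1 + 2 * δ ^ 2) ≤ 1 + δ ^ 2 := by
    rw [Real.sqrt_le_left (by positivity)]
    nlinarith [sq_nonneg (δ ^ 2)]
  calc 1 - δ ^ 2 ≤ (1 + δ ^ 2)⁻¹ := by
        rw [← one_div, le_div_iff₀ (by positivity)]
        nlinarith [sq_nonneg (δ ^ 2)]
    _ ≤ (√(1 + 2 * δ ^ 2))⁻¹ := inv_anti₀ (by positivity) hsqrt

lemma norm_tiltM_sub_tiltM_zero_le
    (ha : ∑ r, ‖a r‖ ^ 2 = (1 : ℝ)) (hb : ∑ r, ‖b r‖ ^ 2 = (1 : ℝ)) :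
    ‖tiltM N A δ a b - tiltM N A 0 a b‖ ≤ √2 * |δ| := by
  refine abs_le_of_sq_le_sq' ?_ (by positivity) |>.2
  calc ‖tiltM N A δ a b - tiltM N A 0 a b‖ ^ 2
    _ ≤ ‖((2 * (1 - (√(1 + 2 * δ ^ 2))⁻¹) : ℝ) : ℂ)‖ :=
        norm_sq_le_norm_of_conjTranspose_mul_self_eq_smul_one
          (conjTranspose_tiltM_sub_tiltM_zero_mul_self δ ha hb)
    _ = 2 * (1 - (√(1 + 2 * δ ^ 2))⁻¹) :=
        Complex.norm_of_nonneg (by linarith [inv_sqrt_one_add_two_mul_sq_le_one δ])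
    _ ≤ 2 * δ ^ 2 := by linarith [one_sub_sq_le_inv_sqrt_one_add_two_mul_sq δ]
    _ = (√2 * |δ|) ^ 2 := by rw [mul_pow, Real.sq_sqrt zero_le_two, sq_abs]

theorem statement16_general (N A : ℕ) (δ : ℝ) (ρ : Matrix (Fin N) (Fin N) ℂ)
    (a b : Fin A → ℂ) (ha : ∑ r, ‖a r‖ ^ 2 = (1 : ℝ)) (hb : ∑ r, ‖b r‖ ^ 2 = (1 : ℝ)) :
    traceNorm (tiltM N A δ a b * ρ * (tiltM N A δ a b)ᴴ - padFirst N A ρ) ≤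
      2 * √2 * |δ| * traceNorm ρ := by
  have hρ := traceNorm_nonneg ρ
  rw [padFirst_eq_tiltM_zero_conj a b]
  set M := tiltM N A δ a b
  set V := tiltM N A 0 a b
  calc traceNorm (M * ρ * Mᴴ - V * ρ * Vᴴ)
    _ ≤ (‖M‖ + ‖V‖) * ‖M - V‖ * traceNorm ρ := traceNorm_conj_sub_conj_le M V ρ
    _ ≤ (1 + 1) * (√2 * |δ|) * traceNorm ρ := by
        gcongr
        exacts [norm_tiltM_le_one δ ha hb, norm_tiltM_le_one 0 ha hb,
          norm_tiltM_sub_tiltM_zero_le δ ha hb]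
    _ = 2 * √2 * |δ| * traceNorm ρ := by ring

end Tilt

/-- Tilting perturbs a density matrix by at most `8δ` in trace norm:
`‖MρM† − ρ̃‖₁ ≤ 8δ`. -/
theorem statement16 (N A : ℕ) (hN : 0 < N) (hA : 0 < A) (δ : ℝ)
    (hδ : δ ∈ Set.Ioo (0 : ℝ) 1)
    (ρ : Matrix (Fin N) (Fin N) ℂ) (hρ : IsDensity ρ)
    (a b : Fin A → ℂ) (ha : ∑ r, ‖a r‖ ^ 2 = (1 : ℝ)) (hb : ∑ r, ‖b r‖ ^ 2 = (1 : ℝ)) :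
    traceNorm (tiltM N A δ a b * ρ * (tiltM N A δ a b)ᴴ - padFirst N A ρ) ≤ 8 * δ := by
  have hbound := statement16_general N A δ ρ a b ha hb
  rw [traceNorm_of_posSemidef hρ.1, hρ.2, Complex.one_re, mul_one, abs_of_pos hδ.1] at hbound
  nlinarith [hδ.1, Real.sqrt_two_lt_three_halves]
end
end
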